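/- Let A ∈ ℝ^{m×n}, c ∈ ℝ^m, t > 0, C_norm > 0, and let a, d ∈ ℝ^m satisfy d_i > 0 and |a_i| ≤ √(d_i) for all i ∈ [m]. For u ∈ ℝ^m_{>0} define δ_t(u) = inf_{η∈ℝⁿ} ‖(t·c + u·a − Aη)/(u·√d)‖_{u+∞}, where all vector operations are entrywise and ‖y‖_{u+∞} = ‖y‖_∞ + C_norm·‖y‖_u. If w, v ∈ ℝ^m_{>0} and ε = ‖log(w) − log(v)‖_{w+∞} ≤ 1/10 (log taken entrywise), then δ_t(v) ≤ (1 + 4ε)·(δ_t(w) + ε). -/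

import Mathlib

/-!
Let `L = log w - log v`, so that `w = exp L * v` entrywise. For each fixed `η`,
`(b + v a) / (v s) = exp L * ((b + w a) / (w s)) + (1 - exp L) * (a / s)`, where
`b = t c - A η` and `s = √d`. Since `|a / s| ≤ 1` and `|1 - exp L| ≤ exp |L| * |L|`, the residual
at `v` is entrywise at most `exp ‖L‖∞` times the sum of the residual at `w` and `|L|`. The change
of weights in the norm costs another `exp (‖L‖∞ / 2)`, so taking the infimum over `η` gives the
factor `exp (3 ‖L‖∞ / 2)`, which is at most `1 + 4 ‖L‖∞` for small `L`.
-/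

open Matrix Real BigOperators Pointwise

/-- The weighted norm `‖x‖_w = (∑ i, w i * x i ^ 2) ^ (1/2)`. -/
noncomputable def wNorm {m : ℕ} (w x : Fin m → ℝ) : ℝ :=
  Real.sqrt (∑ i, w i * x i ^ 2)

/-- The mixed norm `‖y‖_{w+∞} = ‖y‖_∞ + C·‖y‖_w` (`‖·‖` on `Fin m → ℝ` is the `ℓ∞` norm). -/
noncomputable def mixNorm {m : ℕ} (C : ℝ) (w y : Fin m → ℝ) : ℝ :=
  ‖y‖ + C * wNorm w y

/-- The centrality measure
`δ_t(u) = inf_η ‖(t·c + u·a - Aη)/(u·√d)‖_{u+∞}` (entrywise operations). -/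
noncomputable def deltaC {m n : ℕ} (A : Matrix (Fin m) (Fin n) ℝ) (C : ℝ)
    (c a d : Fin m → ℝ) (t : ℝ) (u : Fin m → ℝ) : ℝ :=
  sInf (Set.range fun η : Fin n → ℝ =>
    mixNorm C u (fun i => (t * c i + u i * a i - A.mulVec η i) / (u i * Real.sqrt (d i))))

theorem abs_exp_sub_one_le_abs_mul_exp_abs (x : ℝ) : |Real.exp x - 1| ≤ |x| * Real.exp |x| := by
  have h := Complex.norm_exp_sub_sum_le_norm_mul_exp x 1
  simp only [Finset.sum_range_one, pow_zero, Nat.factorial_zero, Nat.cast_one, div_one,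
    pow_one, Complex.norm_real, Real.norm_eq_abs] at h
  exact_mod_cast h

theorem exp_three_halves_mul_le {x : ℝ} (hx₀ : 0 ≤ x) (hx : x ≤ 5 / 12) :
    Real.exp (3 / 2 * x) ≤ 1 + 4 * x := by
  calc
    Real.exp (3 / 2 * x) ≤ 1 / (1 - 3 / 2 * x) :=
      Real.exp_bound_div_one_sub_of_interval (by linarith) (by linarith)
    _ ≤ 1 + 4 * x := by
      rw [div_le_iff₀ (by linarith)]
      nlinarith

section Norms

variable {m : ℕ} {C r : ℝ} {v w x y : Fin m → ℝ}

theorem wNorm_nonneg (w x : Fin m → ℝ) : 0 ≤ wNorm w x :=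
  Real.sqrt_nonneg _

theorem wNorm_eq_norm_toLp (hw : 0 ≤ w) (x : Fin m → ℝ) :
    wNorm w x = ‖WithLp.toLp 2 fun i => √(w i) * x i‖ := by
  simp only [wNorm, EuclideanSpace.norm_eq, Real.norm_eq_abs, sq_abs, mul_pow,
    Real.sq_sqrt (hw _)]

theorem wNorm_add_le (hw : 0 ≤ w) (x y : Fin m → ℝ) :
    wNorm w (x + y) ≤ wNorm w x + wNorm w y := by
  simp only [wNorm_eq_norm_toLp hw, Pi.add_apply, mul_add]
  exact norm_add_le (WithLp.toLp 2 fun i => √(w i) * x i) (WithLp.toLp 2 fun i => √(w i) * y i)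

theorem wNorm_mono (hw : 0 ≤ w) (hvw : v ≤ w) (hxy : |x| ≤ |y|) : wNorm v x ≤ wNorm w y :=
  Real.sqrt_le_sqrt <| Finset.sum_le_sum fun i _ =>
    mul_le_mul (hvw i) (sq_le_sq.2 (hxy i)) (sq_nonneg _) (hw i)

theorem wNorm_smul (r : ℝ) (w x : Fin m → ℝ) : wNorm w (r • x) = |r| * wNorm w x := by
  simp only [wNorm, Pi.smul_apply, smul_eq_mul, mul_pow, mul_left_comm _ (r ^ 2),
    ← Finset.mul_sum, Real.sqrt_mul (sq_nonneg r), Real.sqrt_sq_eq_abs]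

theorem wNorm_smul_weight (hr : 0 ≤ r) (w x : Fin m → ℝ) :
    wNorm (r • w) x = √r * wNorm w x := by
  simp only [wNorm, Pi.smul_apply, smul_eq_mul, mul_assoc, ← Finset.mul_sum, Real.sqrt_mul hr]

theorem norm_le_mixNorm (hC : 0 ≤ C) (w x : Fin m → ℝ) : ‖x‖ ≤ mixNorm C w x :=
  le_add_of_nonneg_right (mul_nonneg hC (wNorm_nonneg w x))

theorem mixNorm_nonneg (hC : 0 ≤ C) (w x : Fin m → ℝ) : 0 ≤ mixNorm C w x :=
  (norm_nonneg x).trans (norm_le_mixNorm hC w x)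

theorem mixNorm_add_le (hC : 0 ≤ C) (hw : 0 ≤ w) (x y : Fin m → ℝ) :
    mixNorm C w (x + y) ≤ mixNorm C w x + mixNorm C w y := by
  calc
    mixNorm C w (x + y) ≤ (‖x‖ + ‖y‖) + C * (wNorm w x + wNorm w y) :=
      add_le_add (norm_add_le x y) (mul_le_mul_of_nonneg_left (wNorm_add_le hw x y) hC)
    _ = mixNorm C w x + mixNorm C w y := by
      simp only [mixNorm]
      ring

theorem mixNorm_mono (hC : 0 ≤ C) (hw : 0 ≤ w) (hvw : v ≤ w) (hxy : |x| ≤ |y|) :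
    mixNorm C v x ≤ mixNorm C w y := by
  have hnorm : ‖x‖ ≤ ‖y‖ :=
    (pi_norm_le_iff_of_nonneg (norm_nonneg y)).2 fun i => (hxy i).trans (norm_le_pi_norm y i)
  exact add_le_add hnorm (mul_le_mul_of_nonneg_left (wNorm_mono hw hvw hxy) hC)

theorem mixNorm_abs (C : ℝ) (w x : Fin m → ℝ) : mixNorm C w |x| = mixNorm C w x := by
  simp [mixNorm, wNorm, Pi.norm_def]

theorem mixNorm_smul (C r : ℝ) (w x : Fin m → ℝ) :
    mixNorm C w (r • x) = |r| * mixNorm C w x := by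
  simp only [mixNorm, wNorm_smul, norm_smul, Real.norm_eq_abs]
  ring

theorem mixNorm_smul_weight_le (C : ℝ) (hr : 1 ≤ r) (w x : Fin m → ℝ) :
    mixNorm C (r • w) x ≤ √r * mixNorm C w x := by
  have hsqrt : 1 ≤ √r := Real.one_le_sqrt.2 hr
  calc
    mixNorm C (r • w) x = ‖x‖ + √r * (C * wNorm w x) := by
      rw [mixNorm, wNorm_smul_weight (zero_le_one.trans hr), mul_left_comm]
    _ ≤ √r * ‖x‖ + √r * (C * wNorm w x) := by
      gcongr
      exact le_mul_of_one_le_left (norm_nonneg x) hsqrt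
    _ = √r * mixNorm C w x := (mul_add _ _ _).symm

theorem mixNorm_le_of_le_smul (hC : 0 ≤ C) (hr : 1 ≤ r) (hw : 0 ≤ w) (hvw : v ≤ r • w)
    {z : Fin m → ℝ} (hz : |z| ≤ r • (|x| + |y|)) :
    mixNorm C v z ≤ r * √r * (mixNorm C w x + mixNorm C w y) := by
  have hr₀ : 0 ≤ r := zero_le_one.trans hr
  calc
    mixNorm C v z ≤ mixNorm C (r • w) (r • (|x| + |y|)) :=
      mixNorm_mono hC (smul_nonneg hr₀ hw) hvw (hz.trans (le_abs_self _))
    _ = r * mixNorm C (r • w) (|x| + |y|) := by rw [mixNorm_smul, abs_of_nonneg hr₀]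
    _ ≤ r * (√r * mixNorm C w (|x| + |y|)) := by
      gcongr
      exact mixNorm_smul_weight_le C hr w _
    _ ≤ r * (√r * (mixNorm C w |x| + mixNorm C w |y|)) := by
      gcongr
      exact mixNorm_add_le hC hw _ _
    _ = r * √r * (mixNorm C w x + mixNorm C w y) := by
      rw [mixNorm_abs, mixNorm_abs, mul_assoc]

end Norms

theorem abs_add_mul_div_mul_le {a b s v w l : ℝ} (hs : 0 < s) (ha : |a| ≤ s) (hv : v ≠ 0)
    (hwv : w = Real.exp l * v) :
    |(b + v * a) / (v * s)| ≤ Real.exp |l| * (|(b + w * a) / (w * s)| + |l|) := by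
  have hdecomp : (b + v * a) / (v * s) =
      Real.exp l * ((b + w * a) / (w * s)) - (Real.exp l - 1) * (a / s) := by
    rw [hwv]
    field_simp
    ring
  have hslope : |a / s| ≤ 1 := by
    rwa [abs_div, abs_of_pos hs, div_le_one hs]
  calc
    |(b + v * a) / (v * s)|
        ≤ |Real.exp l * ((b + w * a) / (w * s))| + |(Real.exp l - 1) * (a / s)| :=
      hdecomp ▸ abs_sub _ _
    _ = Real.exp l * |(b + w * a) / (w * s)| + |Real.exp l - 1| * |a / s| := by
      rw [abs_mul, abs_mul, Real.abs_exp]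
    _ ≤ Real.exp |l| * |(b + w * a) / (w * s)| + |l| * Real.exp |l| * 1 := by
      gcongr
      · exact le_abs_self l
      · exact abs_exp_sub_one_le_abs_mul_exp_abs l
    _ = Real.exp |l| * (|(b + w * a) / (w * s)| + |l|) := by ring

theorem mixNorm_add_mul_div_mul_le {m : ℕ} {C : ℝ} {a s v w L : Fin m → ℝ} (hC : 0 ≤ C)
    (hs : ∀ i, 0 < s i) (ha : |a| ≤ s) (hv : ∀ i, 0 < v i) (hwv : ∀ i, w i = Real.exp (L i) * v i)
    (b : Fin m → ℝ) :
    mixNorm C v ((b + v * a) / (v * s)) ≤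
      Real.exp (3 / 2 * ‖L‖) * (mixNorm C w ((b + w * a) / (w * s)) + mixNorm C w L) := by
  have hL (i : Fin m) : |L i| ≤ ‖L‖ := norm_le_pi_norm L i
  have hw : 0 ≤ w := fun i => (hwv i).symm ▸ mul_nonneg (Real.exp_nonneg _) (hv i).le
  have hvw : v ≤ Real.exp ‖L‖ • w := fun i => by
    calc
      v i = Real.exp (-L i) * w i := by
        rw [hwv, ← mul_assoc, ← Real.exp_add, neg_add_cancel, Real.exp_zero, one_mul]
      _ ≤ Real.exp ‖L‖ * w i := by
        gcongr
        · exact hw i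
        · exact (neg_le_abs _).trans (hL i)
  have hresidual : |(b + v * a) / (v * s)| ≤
      Real.exp ‖L‖ • (|(b + w * a) / (w * s)| + |L|) := fun i =>
    (abs_add_mul_div_mul_le (hs i) (ha i) (hv i).ne' (hwv i)).trans <|
      mul_le_mul_of_nonneg_right (Real.exp_le_exp.2 (hL i)) (by positivity)
  have hfactor : Real.exp ‖L‖ * √(Real.exp ‖L‖) = Real.exp (3 / 2 * ‖L‖) := by
    rw [← Real.exp_half, ← Real.exp_add]
    ring_nf
  rw [← hfactor]
  exact mixNorm_le_of_le_smul hC (Real.one_le_exp (norm_nonneg L)) hw hvw hresidual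

theorem deltaC_eq_iInf {m n : ℕ} (A : Matrix (Fin m) (Fin n) ℝ) (C : ℝ) (c a d : Fin m → ℝ)
    (t : ℝ) (u : Fin m → ℝ) :
    deltaC A C c a d t u =
      ⨅ η, mixNorm C u ((t • c - A *ᵥ η + u * a) / (u * fun i => √(d i))) := by
  refine iInf_congr fun η => congrArg (mixNorm C u) (funext fun i => ?_)
  simp only [Pi.div_apply, Pi.add_apply, Pi.sub_apply, Pi.mul_apply, Pi.smul_apply, smul_eq_mul,
    sub_add_eq_add_sub]

theorem deltaC_nonneg {m n : ℕ} (A : Matrix (Fin m) (Fin n) ℝ) {C : ℝ} (hC : 0 ≤ C)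
    (c a d : Fin m → ℝ) (t : ℝ) (u : Fin m → ℝ) : 0 ≤ deltaC A C c a d t u :=
  Real.iInf_nonneg fun _ => mixNorm_nonneg hC u _

theorem centrality_w_change_general {m n : ℕ} (A : Matrix (Fin m) (Fin n) ℝ)
    (c : Fin m → ℝ) (t : ℝ) {C : ℝ} (hC : 0 ≤ C)
    {a d : Fin m → ℝ} (hd : ∀ i, 0 < d i) (had : ∀ i, |a i| ≤ √(d i))
    {w v : Fin m → ℝ} (hw : ∀ i, 0 < w i) (hv : ∀ i, 0 < v i) :
    deltaC A C c a d t v ≤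
      Real.exp (3 / 2 * ‖fun i => Real.log (w i) - Real.log (v i)‖) *
        (deltaC A C c a d t w + mixNorm C w (fun i => Real.log (w i) - Real.log (v i))) := by
  have hwv (i : Fin m) : w i = Real.exp (Real.log (w i) - Real.log (v i)) * v i := by
    rw [Real.exp_sub, Real.exp_log (hw i), Real.exp_log (hv i), div_mul_cancel₀ _ (hv i).ne']
  have hbdd (u : Fin m → ℝ) (z : (Fin n → ℝ) → Fin m → ℝ) :
      BddBelow (Set.range fun η => mixNorm C u (z η)) :=
    ⟨0, Set.forall_mem_range.2 fun η => mixNorm_nonneg hC u (z η)⟩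
  rw [deltaC_eq_iInf, deltaC_eq_iInf, ciInf_add (hbdd w _),
    Real.mul_iInf_of_nonneg (Real.exp_nonneg _)]
  exact ciInf_mono (hbdd v _) fun η =>
    mixNorm_add_mul_div_mul_le hC (fun i => Real.sqrt_pos.2 (hd i)) had hv hwv (t • c - A *ᵥ η)

/-- effect of changing the weights on centrality. -/
theorem centrality_w_change {m n : ℕ} (A : Matrix (Fin m) (Fin n) ℝ)
    (c : Fin m → ℝ) (t : ℝ) (ht : 0 < t) (Cnorm : ℝ) (hC : 0 < Cnorm)
    (a d : Fin m → ℝ) (hd : ∀ i, 0 < d i) (had : ∀ i, |a i| ≤ Real.sqrt (d i))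
    (w v : Fin m → ℝ) (hw : ∀ i, 0 < w i) (hv : ∀ i, 0 < v i)
    (hε : mixNorm Cnorm w (fun i => Real.log (w i) - Real.log (v i)) ≤ 1/10) :
    deltaC A Cnorm c a d t v ≤
      (1 + 4 * mixNorm Cnorm w (fun i => Real.log (w i) - Real.log (v i))) *
        (deltaC A Cnorm c a d t w +
          mixNorm Cnorm w (fun i => Real.log (w i) - Real.log (v i))) := by
  have hL := norm_le_mixNorm hC.le w fun i => Real.log (w i) - Real.log (v i)
  exact (centrality_w_change_general A c t hC.le hd had hw hv).trans <| mul_le_mul_of_nonneg_right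
    ((exp_three_halves_mul_le (norm_nonneg _) (by linarith)).trans (by linarith))
    (add_nonneg (deltaC_nonneg A hC.le c a d t w) (mixNorm_nonneg hC.le w _))
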